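/- For every integer m ≥ 1, the odd-order logarithmic derivative of |ζ| at 1/2 satisfies (d^{2m+1}/ds^{2m+1}) log|ζ(s)| at s = 1/2 equals (1/2)·(2m)!·(2^{2m+1} − 1)·ζ(2m+1) + (1/4)·π^{2m+1}·|E_{2m}|, where E_{2m} is the 2m-th Euler number. -/

import Mathlib

/-- Euler numbers `E_n` (`E_0 = 1`, `E_2 = -1`, `E_4 = 5`, `E_{odd} = 0`). -/
def eulerNumber : ℕ → ℚ
  | 0 => 1
  | n + 1 => -(1/2) * ∑ k : Fin (n + 1),
      ((n + 1).choose k * (1 + (-1 : ℚ) ^ (n + 1 - (k : ℕ)) : ℚ) * eulerNumber k)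

/-!
For `0 < x < 1` the functional equation reads
`log |ζ(1 - x)| = log |ζ(x)| + log Γ(x) + log cos(πx/2) + (affine function of x)`.
An odd-order derivative at the fixed point `1/2` of `x ↦ 1 - x` changes sign on the left, so twice
the derivative of `log |ζ|` is minus that of `log Γ(x) + log cos(πx/2)`. The polygamma series of
`log Γ`, a consequence of the convexity of `log Γ` and the recursion of `Γ`, runs at `1/2` over
half-integers and gives the multiple of `ζ(2m+1)`. The derivative of `log cos` is `-tan`, and
`tan(π/4 + x) + tan(π/4 - x) = 2 sec(2x)` expresses the even derivatives of `tan` at `π/4` by those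
of `sec` at `0`, which are Euler numbers up to sign; their absolute values appear because all
derivatives of `tan` are nonnegative on `[0, π/2)`.

These derivatives exist because `ζ` has no zero on `(0, 1)`: there `(1 - 2¹⁻ˢ) ζ(s)` is the sum of
the alternating series `∑ (-1)ᵏ (k+1)⁻ˢ`, which is positive.
-/

section DirichletEta

open Complex Set

/-- The consecutive pair `(2n+1)⁻ˢ - (2n+2)⁻ˢ` of terms of the alternating series
`∑ (-1)ᵏ (k+1)⁻ˢ`. -/
noncomputable def etaPair (n : ℕ) (s : ℂ) : ℂ :=
  ((2 * n + 1 : ℝ) : ℂ) ^ (-s) - ((2 * n + 2 : ℝ) : ℂ) ^ (-s)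

/-- The Dirichlet eta function `η(s) = ∑ (-1)ᵏ (k+1)⁻ˢ` on the half-plane `0 < re s`. The terms are
taken in consecutive pairs, which makes the series absolutely convergent there. -/
noncomputable def dirichletEta (s : ℂ) : ℂ :=
  ∑' n, etaPair n s

lemma norm_ofReal_cpow_neg_sub_le {a b : ℝ} (ha : 0 < a) (hab : a ≤ b) {s : ℂ} (hs : -1 ≤ s.re) :
    ‖(a : ℂ) ^ (-s) - (b : ℂ) ^ (-s)‖ ≤ ‖s‖ * a ^ (-(s.re + 1)) * (b - a) := by
  obtain rfl | hs₀ := eq_or_ne s 0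
  · simp
  rw [norm_sub_rev]
  refine norm_image_sub_le_of_norm_deriv_le_segment' (f := fun x : ℝ ↦ (x : ℂ) ^ (-s))
    (f' := fun x : ℝ ↦ -s * (x : ℂ) ^ (-s - 1)) (fun x hx ↦ ?_) (fun x hx ↦ ?_) b ⟨hab, le_rfl⟩
  · have hx₀ : x ≠ 0 := (ha.trans_le hx.1).ne'
    exact (hasDerivAt_ofReal_cpow_const hx₀ (neg_ne_zero.2 hs₀)).hasDerivWithinAt
  · have hre : (-s - 1).re = -(s.re + 1) := by simp [sub_eq_add_neg, add_comm]
    rw [norm_mul, norm_neg, norm_cpow_eq_rpow_re_of_pos (ha.trans_le hx.1), hre]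
    gcongr ‖s‖ * ?_
    exact Real.rpow_le_rpow_of_nonpos ha hx.1 (by linarith)

lemma norm_etaPair_le (n : ℕ) {s : ℂ} (hs : -1 ≤ s.re) :
    ‖etaPair n s‖ ≤ ‖s‖ * ((n + 1 : ℕ) : ℝ) ^ (-(s.re + 1)) := by
  calc ‖etaPair n s‖
      ≤ ‖s‖ * (2 * n + 1 : ℝ) ^ (-(s.re + 1)) * (2 * n + 2 - (2 * n + 1)) :=
        norm_ofReal_cpow_neg_sub_le (by positivity) (by linarith) hs
    _ = ‖s‖ * (2 * n + 1 : ℝ) ^ (-(s.re + 1)) := by ring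
    _ ≤ ‖s‖ * ((n + 1 : ℕ) : ℝ) ^ (-(s.re + 1)) := by
        gcongr ‖s‖ * ?_
        refine Real.rpow_le_rpow_of_nonpos (by positivity) ?_ (by linarith)
        push_cast
        linarith [n.cast_nonneg (α := ℝ)]

lemma summable_natCast_add_one_rpow_neg {σ : ℝ} (hσ : 0 < σ) :
    Summable fun n : ℕ ↦ ((n + 1 : ℕ) : ℝ) ^ (-(σ + 1)) :=
  (summable_nat_add_iff 1).2 (Real.summable_nat_rpow.2 (by linarith))

lemma summable_etaPair {s : ℂ} (hs : 0 < s.re) : Summable fun n ↦ etaPair n s :=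
  .of_norm_bounded ((summable_natCast_add_one_rpow_neg hs).mul_left ‖s‖)
    fun n ↦ norm_etaPair_le n (by linarith)

lemma differentiable_etaPair (n : ℕ) : Differentiable ℂ (etaPair n) := fun s ↦ by
  have h₁ : ((2 * n + 1 : ℝ) : ℂ) ≠ 0 := by norm_cast
  have h₂ : ((2 * n + 2 : ℝ) : ℂ) ≠ 0 := by norm_cast
  exact (differentiableAt_id.neg.const_cpow (.inl h₁)).sub
    (differentiableAt_id.neg.const_cpow (.inl h₂))

lemma differentiableAt_dirichletEta {s : ℂ} (hs : 0 < s.re) :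
    DifferentiableAt ℂ dirichletEta s := by
  set U : Set ℂ := {z | s.re / 2 < z.re} ∩ Metric.ball 0 (‖s‖ + 1)
  have hU : IsOpen U := (isOpen_lt continuous_const continuous_re).inter Metric.isOpen_ball
  have hsU : s ∈ U := ⟨half_lt_self hs, by simp⟩
  have hbound (n : ℕ) (z : ℂ) (hz : z ∈ U) :
      ‖etaPair n z‖ ≤ (‖s‖ + 1) * ((n + 1 : ℕ) : ℝ) ^ (-(s.re / 2 + 1)) := by
    have hre : s.re / 2 < z.re := hz.1
    have hnorm : ‖z‖ < ‖s‖ + 1 := by simpa using hz.2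
    refine (norm_etaPair_le n (by linarith)).trans ?_
    gcongr
    simp
  exact (differentiableOn_tsum_of_summable_norm
    ((summable_natCast_add_one_rpow_neg (half_pos hs)).mul_left _)
    (fun n ↦ (differentiable_etaPair n).differentiableOn) hU hbound).differentiableAt
    (hU.mem_nhds hsU)

lemma dirichletEta_eq_of_one_lt_re {s : ℂ} (hs : 1 < s.re) :
    dirichletEta s = (1 - 2 ^ (1 - s)) * riemannZeta s := by
  set f : ℕ → ℂ := fun n ↦ 1 / ((n : ℂ) + 1) ^ s
  have hzeta : riemannZeta s = ∑' n, f n := zeta_eq_tsum_one_div_nat_add_one_cpow hs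
  have hsum : Summable f := by
    simpa [f] using (summable_nat_add_iff 1).2 (summable_one_div_nat_cpow.2 hs)
  have heven : Summable fun n ↦ f (2 * n) := hsum.comp_injective fun _ _ h ↦ by simpa using h
  have hodd : Summable fun n ↦ f (2 * n + 1) := hsum.comp_injective fun _ _ h ↦ by simpa using h
  have hpair (n : ℕ) : etaPair n s = f (2 * n) - f (2 * n + 1) := by
    simp only [etaPair, cpow_neg, f]
    push_cast
    ring_nf
  have htwo : ∑' n, f (2 * n + 1) = 2 ^ (-s) * riemannZeta s := by
    rw [hzeta, ← tsum_mul_left]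
    refine tsum_congr fun n ↦ ?_
    have hfac : ((2 * n + 1 : ℕ) : ℂ) + 1 = ((2 : ℝ) : ℂ) * ((n + 1 : ℝ) : ℂ) := by
      push_cast; ring
    simp only [f, hfac, mul_cpow_ofReal_nonneg zero_le_two n.cast_add_one_pos.le, cpow_neg]
    push_cast
    ring
  have hpow : (2 : ℂ) ^ (1 - s) = 2 * 2 ^ (-s) := by
    rw [sub_eq_add_neg, cpow_add _ _ two_ne_zero, cpow_one]
  rw [dirichletEta, tsum_congr hpair, heven.tsum_sub hodd, hpow]
  linear_combination tsum_even_add_odd heven hodd - 2 * htwo - hzeta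

lemma dirichletEta_eq {s : ℂ} (hs : 0 < s.re) (hs₁ : s ≠ 1) :
    dirichletEta s = (1 - 2 ^ (1 - s)) * riemannZeta s := by
  set U : Set ℂ := {z | 0 < z.re}
  have hU : IsOpen U := isOpen_lt continuous_const continuous_re
  have hU_conn : IsPreconnected U := (convex_halfSpace_re_gt 0).isPreconnected
  have hleft : AnalyticOnNhd ℂ (fun z ↦ (z - 1) * dirichletEta z) U :=
    DifferentiableOn.analyticOnNhd (fun z hz ↦ ((differentiableAt_id.sub_const 1).mul
      (differentiableAt_dirichletEta hz)).differentiableWithinAt) hU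
  have hright : AnalyticOnNhd ℂ (fun z ↦ (1 - 2 ^ (1 - z)) * riemannZeta₁ z) U := by
    have hpow : Differentiable ℂ fun z : ℂ ↦ (2 : ℂ) ^ (1 - z) := fun z ↦
      (differentiableAt_id.const_sub 1).const_cpow (.inl two_ne_zero)
    exact ((hpow.const_sub 1).mul differentiable_riemannZeta₁).differentiableOn.analyticOnNhd hU
  have hnear : (fun z ↦ (z - 1) * dirichletEta z)
      =ᶠ[nhds 2] fun z ↦ (1 - 2 ^ (1 - z)) * riemannZeta₁ z := by
    filter_upwards [(isOpen_lt continuous_const continuous_re).mem_nhds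
      (show (1 : ℝ) < (2 : ℂ).re by simp)] with z hz
    have hz₁ : z ≠ 1 := by rintro rfl; simp at hz
    rw [dirichletEta_eq_of_one_lt_re hz, riemannZeta_eq_inv_sub_mul hz₁]
    field [sub_ne_zero.2 hz₁]
  have heq := hleft.eqOn_of_preconnected_of_eventuallyEq hright hU_conn
    (show (2 : ℂ) ∈ U by simp [U]) hnear hs
  rw [riemannZeta_eq_inv_sub_mul hs₁]
  field_simp [sub_ne_zero.2 hs₁]
  linear_combination heq

lemma dirichletEta_ofReal_ne_zero {x : ℝ} (hx : 0 < x) : dirichletEta x ≠ 0 := by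
  set f : ℕ → ℝ := fun n ↦ (2 * n + 1) ^ (-x) - (2 * n + 2) ^ (-x)
  have hf : (fun n ↦ etaPair n x) = fun n ↦ (f n : ℂ) := by
    funext n
    simp only [etaPair, f, ofReal_sub, ← ofReal_neg]
    rw [ofReal_cpow (by positivity), ofReal_cpow (by positivity)]
  have hpos (n : ℕ) : 0 < f n :=
    sub_pos.2 (Real.rpow_lt_rpow_of_neg (by positivity) (by linarith) (by linarith))
  have hsum : Summable f := summable_ofReal.1 (hf ▸ summable_etaPair (by simpa using hx))
  rw [dirichletEta, hf, ← ofReal_tsum, ofReal_ne_zero]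
  exact (hsum.tsum_pos (fun n ↦ (hpos n).le) 0 (hpos 0)).ne'

lemma riemannZeta_ofReal_ne_zero {x : ℝ} (hx : 0 < x) : riemannZeta x ≠ 0 := by
  obtain hx₁ | hx₁ := le_or_gt 1 x
  · exact riemannZeta_ne_zero_of_one_le_re (by simpa using hx₁)
  · have heta := dirichletEta_ofReal_ne_zero hx
    rw [dirichletEta_eq (by simpa using hx) (by exact_mod_cast hx₁.ne)] at heta
    exact right_ne_zero_of_mul heta

end DirichletEta

section Polygamma

open Real Set Filter Topology

lemma summable_one_div_add_natCast_pow {a : ℝ} (ha : 0 ≤ a) {p : ℕ} (hp : 1 < p) :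
    Summable fun n : ℕ ↦ 1 / (a + n) ^ p := by
  refine ((summable_one_div_nat_add_rpow a p).2 (by exact_mod_cast hp)).congr fun n ↦ ?_
  rw [rpow_natCast, abs_of_nonneg (by positivity), add_comm]

lemma summable_and_hasDerivAt_tsum_of_hasDerivAt_div_add_pow {g : ℕ → ℝ → ℝ} {c : ℝ} {p : ℕ}
    (hp : 1 < p) (hg : ∀ n, ∀ y > 0, HasDerivAt (g n) (c / (y + n) ^ p) y)
    {x₀ : ℝ} (hx₀ : 0 < x₀) (hsum : Summable (g · x₀)) {x : ℝ} (hx : 0 < x) :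
    Summable (g · x) ∧ HasDerivAt (fun y ↦ ∑' n, g n y) (c * ∑' n : ℕ, 1 / (x + n) ^ p) x := by
  obtain ⟨a, ha, hamin⟩ := exists_between (lt_min hx₀ hx)
  obtain ⟨hax₀, hax⟩ := lt_min_iff.1 hamin
  have hbound_sum : Summable fun n : ℕ ↦ |c| * (1 / (a + n) ^ p) :=
    (summable_one_div_add_natCast_pow ha.le hp).mul_left _
  have hderiv (n : ℕ) (y : ℝ) (hy : y ∈ Ioi a) : HasDerivAt (g n) (c / (y + n) ^ p) y :=
    hg n y (ha.trans hy)
  have hbound (n : ℕ) (y : ℝ) (hy : y ∈ Ioi a) :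
      ‖c / (y + n) ^ p‖ ≤ |c| * (1 / (a + n) ^ p) := by
    have hay : a ≤ y := (mem_Ioi.1 hy).le
    have hy₀ : 0 < y := ha.trans hy
    rw [norm_div, norm_eq_abs, norm_of_nonneg (by positivity), div_eq_mul_one_div]
    gcongr
  refine ⟨summable_of_summable_hasDerivAt_of_isPreconnected hbound_sum isOpen_Ioi
    isPreconnected_Ioi hderiv hbound hax₀ hsum hax, ?_⟩
  simpa only [← tsum_mul_left, mul_one_div] using hasDerivAt_tsum_of_isPreconnected hbound_sum
    isOpen_Ioi isPreconnected_Ioi hderiv hbound hax₀ hsum hax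

lemma hasDerivAt_one_div_add_pow (a : ℝ) (p : ℕ) {y : ℝ} (hy : y + a ≠ 0) :
    HasDerivAt (fun z ↦ 1 / (z + a) ^ p) (-p / (y + a) ^ (p + 1)) y := by
  have h := (hasDerivAt_zpow (-p) (y + a) (.inl hy)).comp_add_const y a
  simp only [zpow_neg, zpow_natCast, ← one_div] at h
  refine h.congr_deriv ?_
  rw [show (-p - 1 : ℤ) = -((p + 1 : ℕ) : ℤ) by push_cast; ring, zpow_neg, zpow_natCast]
  push_cast
  rw [div_eq_mul_inv]

lemma hasDerivAt_tsum_one_div_add_pow {p : ℕ} (hp : 1 < p) {x : ℝ} (hx : 0 < x) :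
    HasDerivAt (fun y : ℝ ↦ ∑' n : ℕ, 1 / (y + n) ^ p)
      (-(p : ℝ) * ∑' n : ℕ, 1 / (x + n) ^ (p + 1)) x :=
  (summable_and_hasDerivAt_tsum_of_hasDerivAt_div_add_pow (by lia)
    (fun n y (hy : 0 < y) ↦ hasDerivAt_one_div_add_pow n p (by positivity)) hx
    (summable_one_div_add_natCast_pow hx.le hp) hx).2

lemma differentiableAt_Gamma_of_pos {x : ℝ} (hx : 0 < x) : DifferentiableAt ℝ Gamma x :=
  differentiableAt_Gamma fun m ↦ by linarith [m.cast_nonneg (α := ℝ)]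

lemma deriv_log_comp_Gamma {x : ℝ} (hx : 0 < x) : deriv (log ∘ Gamma) x = logDeriv Gamma x :=
  deriv_log_comp_eq_logDeriv (differentiableAt_Gamma_of_pos hx) (Gamma_pos_of_pos hx).ne'

lemma logDeriv_Gamma_add_one {x : ℝ} (hx : 0 < x) :
    logDeriv Gamma (x + 1) = logDeriv Gamma x + 1 / x := by
  have hrec : (fun y ↦ Gamma (y + 1)) =ᶠ[𝓝 x] fun y ↦ y * Gamma y := by
    filter_upwards [eventually_ne_nhds hx.ne'] with y hy using Gamma_add_one hy
  calc logDeriv Gamma (x + 1)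
      = logDeriv (fun y ↦ Gamma (y + 1)) x := by
        rw [logDeriv_apply, logDeriv_apply, deriv_comp_add_const]
    _ = logDeriv (fun y ↦ y * Gamma y) x := by
        rw [logDeriv_apply, logDeriv_apply, hrec.deriv_eq, hrec.eq_of_nhds]
    _ = logDeriv Gamma x + 1 / x := by
        rw [logDeriv_mul x hx.ne' (Gamma_pos_of_pos hx).ne' differentiableAt_fun_id
          (differentiableAt_Gamma_of_pos hx), logDeriv_id', add_comm]

lemma logDeriv_Gamma_add_natCast {x : ℝ} (hx : 0 < x) (N : ℕ) :
    logDeriv Gamma (x + N) = logDeriv Gamma x + ∑ n ∈ Finset.range N, 1 / (x + n) := by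
  induction N with
  | zero => simp
  | succ N ih =>
    rw [Finset.sum_range_succ, ← add_assoc, ← ih, ← logDeriv_Gamma_add_one (by positivity)]
    push_cast
    ring_nf

lemma slope_log_comp_Gamma {x : ℝ} (hx : 0 < x) : slope (log ∘ Gamma) x (x + 1) = log x := by
  rw [slope_def_field, Function.comp_apply, Function.comp_apply, Gamma_add_one hx.ne',
    log_mul hx.ne' (Gamma_pos_of_pos hx).ne']
  ring

lemma logDeriv_Gamma_le_log {x : ℝ} (hx : 0 < x) : logDeriv Gamma x ≤ log x := by
  rw [← slope_log_comp_Gamma hx, ← deriv_log_comp_Gamma hx]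
  refine convexOn_log_Gamma.deriv_le_slope hx (by positivity : 0 < x + 1) (lt_add_one x) ?_
  exact (differentiableAt_Gamma_of_pos hx).log (Gamma_pos_of_pos hx).ne'

lemma log_sub_one_div_le_logDeriv_Gamma {x : ℝ} (hx : 0 < x) :
    log x - 1 / x ≤ logDeriv Gamma x := by
  have hx₁ : 0 < x + 1 := by positivity
  rw [sub_le_iff_le_add, ← logDeriv_Gamma_add_one hx, ← slope_log_comp_Gamma hx,
    ← deriv_log_comp_Gamma hx₁]
  refine convexOn_log_Gamma.slope_le_deriv hx hx₁ (lt_add_one x) ?_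
  exact (differentiableAt_Gamma_of_pos hx₁).log (Gamma_pos_of_pos hx₁).ne'

lemma tendsto_logDeriv_Gamma_sub_log :
    Tendsto (fun x ↦ logDeriv Gamma x - log x) atTop (𝓝 0) := by
  refine tendsto_of_tendsto_of_tendsto_of_le_of_le' (g := fun x ↦ -(1 / x)) ?_
    tendsto_const_nhds ?_ ?_
  · simpa using (tendsto_inv_atTop_zero (𝕜 := ℝ)).neg
  · filter_upwards [eventually_gt_atTop 0] with x hx
    linarith [log_sub_one_div_le_logDeriv_Gamma hx]
  · filter_upwards [eventually_gt_atTop 0] with x hx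
    linarith [logDeriv_Gamma_le_log hx]

lemma tendsto_logDeriv_Gamma_add_sub_log (y : ℝ) :
    Tendsto (fun x ↦ logDeriv Gamma (x + y) - log x) atTop (𝓝 0) := by
  simpa using (tendsto_logDeriv_Gamma_sub_log.comp
    (tendsto_atTop_add_const_right _ y tendsto_id)).add (tendsto_log_comp_add_sub_log y)

lemma tendsto_sum_one_div_sub_one_div {x : ℝ} (hx : 0 < x) :
    Tendsto (fun N : ℕ ↦ ∑ n ∈ Finset.range N, (1 / (1 + n : ℝ) - 1 / (x + n))) atTop
      (𝓝 (logDeriv Gamma x - logDeriv Gamma 1)) := by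
  have hdiff := ((tendsto_logDeriv_Gamma_add_sub_log 1).sub
    (tendsto_logDeriv_Gamma_add_sub_log x)).comp tendsto_natCast_atTop_atTop
  have hlim := hdiff.const_add (logDeriv Gamma x - logDeriv Gamma 1)
  rw [sub_zero, add_zero] at hlim
  refine hlim.congr fun N ↦ ?_
  simp only [Function.comp_apply, add_comm (N : ℝ), logDeriv_Gamma_add_natCast hx,
    logDeriv_Gamma_add_natCast one_pos, Finset.sum_sub_distrib]
  ring

lemma deriv_logDeriv_Gamma {x : ℝ} (hx : 0 < x) :
    deriv (logDeriv Gamma) x = ∑' n : ℕ, 1 / (x + n) ^ 2 := by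
  set g : ℕ → ℝ → ℝ := fun n y ↦ 1 / (1 + n : ℝ) - 1 / (y + n)
  have hg (n : ℕ) (y : ℝ) (hy : 0 < y) : HasDerivAt (g n) (1 / (y + n) ^ 2) y := by
    have hyn : y + n ≠ 0 := by positivity
    simpa [g, neg_div] using (hasDerivAt_one_div_add_pow n 1 hyn).const_sub (1 / (1 + n : ℝ))
  have hg₁ : Summable (g · 1) := by simp [g]
  have hseries {y : ℝ} (hy : 0 < y) := summable_and_hasDerivAt_tsum_of_hasDerivAt_div_add_pow
    one_lt_two hg one_pos hg₁ hy
  have heq : logDeriv Gamma =ᶠ[𝓝 x] fun y ↦ logDeriv Gamma 1 + ∑' n, g n y := by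
    filter_upwards [eventually_gt_nhds hx] with y hy
    linarith [tendsto_nhds_unique (hseries hy).1.hasSum.tendsto_sum_nat
      (tendsto_sum_one_div_sub_one_div hy)]
  rw [heq.deriv_eq, deriv_const_add, (hseries hx).2.deriv, one_mul]

lemma iteratedDeriv_logDeriv_Gamma (k : ℕ) {x : ℝ} (hx : 0 < x) :
    iteratedDeriv (k + 1) (logDeriv Gamma) x =
      (-1) ^ k * (k + 1).factorial * ∑' n : ℕ, 1 / (x + n) ^ (k + 2) := by
  induction k generalizing x with
  | zero => simpa using deriv_logDeriv_Gamma hx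
  | succ k ih =>
    have heq : iteratedDeriv (k + 1) (logDeriv Gamma) =ᶠ[𝓝 x]
        fun y ↦ (-1) ^ k * (k + 1).factorial * ∑' n : ℕ, 1 / (y + n) ^ (k + 2) := by
      filter_upwards [eventually_gt_nhds hx] with y hy using ih hy
    rw [iteratedDeriv_succ, heq.deriv_eq,
      ((hasDerivAt_tsum_one_div_add_pow (by lia : 1 < k + 2) hx).const_mul _).deriv,
      Nat.factorial_succ (k + 1)]
    push_cast
    ring

lemma iteratedDeriv_log_Gamma {k : ℕ} (hk : 1 ≤ k) {x : ℝ} (hx : 0 < x) :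
    iteratedDeriv (k + 1) (fun y ↦ log (Gamma y)) x =
      (-1) ^ (k + 1) * k.factorial * ∑' n : ℕ, 1 / (x + n) ^ (k + 1) := by
  obtain ⟨k, rfl⟩ := Nat.exists_eq_add_of_le' hk
  have heq : deriv (fun y ↦ log (Gamma y)) =ᶠ[𝓝 x] logDeriv Gamma := by
    filter_upwards [eventually_gt_nhds hx] with y hy using deriv_log_comp_Gamma hy
  rw [iteratedDeriv_succ', heq.iteratedDeriv_eq, iteratedDeriv_logDeriv_Gamma k hx]
  ring

end Polygamma

section HalfIntegerShift

lemma tsum_one_div_half_add_natCast_pow {k : ℕ} (hk : 1 < k) :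
    ((∑' n : ℕ, 1 / (1 / 2 + n : ℝ) ^ k : ℝ) : ℂ) = (2 ^ k - 1) * riemannZeta k := by
  set f : ℕ → ℝ := fun n ↦ 1 / (n : ℝ) ^ k
  have hf : Summable f := Real.summable_one_div_nat_pow.2 hk
  have hzeta : riemannZeta k = ((∑' n, f n : ℝ) : ℂ) := by
    rw [zeta_nat_eq_tsum_of_gt_one hk]
    push_cast [f]
    rfl
  have heven : ∑' n, f (2 * n) = (∑' n, f n) / 2 ^ k := by
    rw [← tsum_div_const]
    refine tsum_congr fun n ↦ ?_
    simp only [f, Nat.cast_mul, Nat.cast_ofNat]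
    rw [mul_pow, mul_comm, div_mul_eq_div_div]
  have hodd : ∑' n, f (2 * n + 1) = (∑' n : ℕ, 1 / (1 / 2 + n : ℝ) ^ k) / 2 ^ k := by
    rw [← tsum_div_const]
    refine tsum_congr fun n ↦ ?_
    rw [div_div, ← mul_pow]
    push_cast [f]
    ring_nf
  have hsplit := tsum_even_add_odd (hf.comp_injective (mul_right_injective₀ two_ne_zero))
    (hf.comp_injective ((add_left_injective 1).comp (mul_right_injective₀ two_ne_zero)))
  rw [heven, hodd, ← add_div, div_eq_iff (by positivity)] at hsplit
  rw [hzeta, eq_sub_of_add_eq' hsplit]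
  push_cast
  ring

end HalfIntegerShift

section EulerNumbers

open Real Set Filter Topology

lemma two_mul_iteratedDeriv_cos_zero (n : ℕ) :
    2 * ((iteratedDeriv n cos 0 : ℝ) : ℂ) = Complex.I ^ n * (1 + (-1) ^ n) := by
  obtain ⟨m, rfl | rfl⟩ := n.even_or_odd'
  · rw [iteratedDeriv_even_cos, (even_two_mul m).neg_one_pow, pow_mul, Complex.I_sq,
      one_add_one_eq_two, mul_comm]
    simp
  · rw [iteratedDeriv_odd_cos, (odd_two_mul_add_one m).neg_one_pow]
    simp

lemma sum_choose_mul_iteratedDeriv_inv_cos {n : ℕ} (hn : n ≠ 0) :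
    ∑ i ∈ Finset.range (n + 1),
      n.choose i * iteratedDeriv i (fun x ↦ (cos x)⁻¹) 0 * iteratedDeriv (n - i) cos 0 = 0 := by
  have hcos : cos 0 ≠ 0 := by simp
  have hone : (fun x ↦ (cos x)⁻¹ * cos x) =ᶠ[𝓝 0] fun _ ↦ 1 := by
    filter_upwards [continuous_cos.continuousAt.eventually_ne hcos] with x hx
      using inv_mul_cancel₀ hx
  rw [← iteratedDeriv_fun_mul (f := fun x ↦ (cos x)⁻¹) (contDiff_cos.contDiffAt.inv hcos)
      contDiff_cos.contDiffAt,
    hone.iteratedDeriv_eq, iteratedDeriv_const, if_neg hn]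

lemma iteratedDeriv_inv_cos_zero (n : ℕ) :
    ((iteratedDeriv n (fun x ↦ (cos x)⁻¹) 0 : ℝ) : ℂ) = Complex.I ^ n * (eulerNumber n : ℂ) := by
  induction n using Nat.strong_induction_on with
  | _ n ih =>
    obtain _ | n := n
    · simp [eulerNumber]
    have hterm (i : ℕ) (hi : i ∈ Finset.range (n + 1)) :
        2 * (((n + 1).choose i : ℂ) * ((iteratedDeriv i (fun x ↦ (cos x)⁻¹) 0 : ℝ) : ℂ) *
          ((iteratedDeriv (n + 1 - i) cos 0 : ℝ) : ℂ)) =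
        Complex.I ^ (n + 1) *
          ((n + 1).choose i * (1 + (-1) ^ (n + 1 - i)) * (eulerNumber i : ℂ)) := by
      have hin : i < n + 1 := Finset.mem_range.1 hi
      rw [ih i hin, ← Nat.add_sub_of_le hin.le, pow_add, Nat.add_sub_cancel_left]
      linear_combination ((i + (n + 1 - i)).choose i : ℂ) * Complex.I ^ i * (eulerNumber i : ℂ) *
        two_mul_iteratedDeriv_cos_zero (n + 1 - i)
    have hsum := congrArg ((↑) : ℝ → ℂ) (sum_choose_mul_iteratedDeriv_inv_cos n.succ_ne_zero)
    rw [Finset.sum_range_succ] at hsum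
    push_cast at hsum
    simp only [Nat.choose_self, Nat.cast_one, one_mul, Nat.sub_self, iteratedDeriv_zero, cos_zero,
      Complex.ofReal_one, mul_one] at hsum
    rw [eulerNumber, Fin.sum_univ_eq_sum_range fun i ↦
      ((n + 1).choose i * (1 + (-1 : ℚ) ^ (n + 1 - i)) * eulerNumber i)]
    push_cast
    rw [eq_neg_of_add_eq_zero_right hsum, mul_left_comm, Finset.mul_sum,
      ← Finset.sum_congr rfl hterm, ← Finset.mul_sum]
    ring

lemma iteratedDeriv_even_inv_cos_zero (m : ℕ) :
    iteratedDeriv (2 * m) (fun x ↦ (cos x)⁻¹) 0 = (-1) ^ m * (eulerNumber (2 * m) : ℝ) := by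
  have h := iteratedDeriv_inv_cos_zero (2 * m)
  rw [pow_mul, Complex.I_sq] at h
  exact_mod_cast h

lemma iteratedDeriv_comp_mul_left {𝕜 F : Type*} [NontriviallyNormedField 𝕜] [NormedAddCommGroup F]
    [NormedSpace 𝕜 F] (n : ℕ) (c : 𝕜) (f : 𝕜 → F) (x : 𝕜) :
    iteratedDeriv n (fun y ↦ f (c * y)) x = c ^ n • iteratedDeriv n f (c * x) := by
  induction n generalizing x with
  | zero => simp
  | succ n ih =>
    rw [iteratedDeriv_succ, funext ih, deriv_fun_const_smul_field, deriv_comp_mul_left,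
      ← iteratedDeriv_succ, smul_smul, pow_succ]

lemma iteratedDeriv_succ_tan (n : ℕ) {x : ℝ} (hx : cos x ≠ 0) :
    iteratedDeriv (n + 1) tan x = iteratedDeriv n (fun y ↦ 1 + tan y * tan y) x := by
  have hderiv : deriv tan =ᶠ[𝓝 x] fun y ↦ 1 + tan y * tan y := by
    filter_upwards [continuous_cos.continuousAt.eventually_ne hx] with y hy
    rw [deriv_tan, ← inv_one_add_tan_sq hy, one_div, inv_inv, sq]
  rw [iteratedDeriv_succ', hderiv.iteratedDeriv_eq]

lemma iteratedDeriv_tan_nonneg (n : ℕ) {x : ℝ} (hx₀ : 0 ≤ x) (hx : x < π / 2) :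
    0 ≤ iteratedDeriv n tan x := by
  have hcos : cos x ≠ 0 := (cos_pos_of_mem_Ioo ⟨by linarith [pi_pos], hx⟩).ne'
  have hsmooth (k : ℕ) : ContDiffAt ℝ k tan x := contDiffAt_tan.2 hcos
  induction n using Nat.strong_induction_on with
  | _ n ih =>
    obtain _ | n := n
    · simpa using tan_nonneg_of_nonneg_of_le_pi_div_two hx₀ hx.le
    rw [iteratedDeriv_succ_tan n hcos,
      iteratedDeriv_fun_add contDiffAt_const ((hsmooth n).mul (hsmooth n)),
      iteratedDeriv_fun_mul (hsmooth n) (hsmooth n), iteratedDeriv_const]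
    refine add_nonneg (by split_ifs <;> simp) (Finset.sum_nonneg fun i hi ↦ ?_)
    have hi' := ih i (Finset.mem_range.1 hi)
    have hni := ih (n - i) (by lia)
    positivity

lemma tan_add_inv_tan (x : ℝ) : tan x + (tan x)⁻¹ = 2 * (sin (2 * x))⁻¹ := by
  rw [tan_eq_sin_div_cos, sin_two_mul]
  by_cases hsin : sin x = 0
  · simp [hsin]
  by_cases hcos : cos x = 0
  · simp [hcos]
  field_simp
  exact sin_sq_add_cos_sq x

lemma tan_pi_div_four_add_add_tan_pi_div_four_sub (x : ℝ) :
    tan (π / 4 + x) + tan (π / 4 - x) = 2 * (cos (2 * x))⁻¹ := by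
  calc tan (π / 4 + x) + tan (π / 4 - x)
      = tan (π / 4 + x) + (tan (π / 4 + x))⁻¹ := by
        rw [← tan_pi_div_two_sub]
        ring_nf
    _ = 2 * (cos (2 * x))⁻¹ := by
        rw [tan_add_inv_tan, ← cos_pi_div_two_sub, ← cos_neg]
        ring_nf

lemma iteratedDeriv_even_tan_pi_div_four_eq_neg_one_pow_mul (m : ℕ) :
    iteratedDeriv (2 * m) tan (π / 4) = 4 ^ m * ((-1) ^ m * (eulerNumber (2 * m) : ℝ)) := by
  have hadd : ContDiffAt ℝ (2 * m : ℕ) (fun x ↦ tan (π / 4 + x)) 0 :=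
    (contDiffAt_tan.2 (by simp)).comp 0 (contDiffAt_const.add contDiffAt_id)
  have hsub : ContDiffAt ℝ (2 * m : ℕ) (fun x ↦ tan (π / 4 - x)) 0 :=
    (contDiffAt_tan.2 (by simp)).comp 0 (contDiffAt_const.sub contDiffAt_id)
  refine mul_left_cancel₀ (two_ne_zero (α := ℝ)) ?_
  calc 2 * iteratedDeriv (2 * m) tan (π / 4)
      = iteratedDeriv (2 * m) (fun x ↦ tan (π / 4 + x) + tan (π / 4 - x)) 0 := by
        rw [iteratedDeriv_fun_add hadd hsub, iteratedDeriv_comp_const_add,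
          iteratedDeriv_comp_const_sub]
        simp [two_mul]
    _ = 2 * (4 ^ m * ((-1) ^ m * (eulerNumber (2 * m) : ℝ))) := by
        rw [funext tan_pi_div_four_add_add_tan_pi_div_four_sub, iteratedDeriv_const_mul_field,
          iteratedDeriv_comp_mul_left (2 * m) 2 (fun x ↦ (cos x)⁻¹), mul_zero,
          iteratedDeriv_even_inv_cos_zero, smul_eq_mul, pow_mul]
        norm_num

lemma iteratedDeriv_even_tan_pi_div_four (m : ℕ) :
    iteratedDeriv (2 * m) tan (π / 4) = 4 ^ m * |(eulerNumber (2 * m) : ℝ)| := by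
  have hnonneg : 0 ≤ iteratedDeriv (2 * m) tan (π / 4) :=
    iteratedDeriv_tan_nonneg _ (by positivity) (by linarith [pi_pos])
  rw [← abs_of_nonneg hnonneg, iteratedDeriv_even_tan_pi_div_four_eq_neg_one_pow_mul]
  simp [abs_mul]

end EulerNumbers

section FunctionalEquation

open Real Set Filter Topology

lemma contDiffAt_log_norm_comp_ofReal {f : ℂ → ℂ} {x : ℝ} (hf : AnalyticAt ℂ f x) (hx : f x ≠ 0)
    (n : WithTop ℕ∞) : ContDiffAt ℝ n (fun y : ℝ ↦ log ‖f y‖) x := by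
  have hf' : ContDiffAt ℝ n (fun y : ℝ ↦ f y) x :=
    (hf.contDiffAt.restrict_scalars ℝ).comp x Complex.ofRealCLM.contDiff.contDiffAt
  exact (hf'.norm ℂ hx).log (norm_ne_zero_iff.2 hx)

lemma contDiffAt_log_norm_riemannZeta {x : ℝ} (hx : 0 < x) (hx₁ : x ≠ 1) (n : WithTop ℕ∞) :
    ContDiffAt ℝ n (fun y : ℝ ↦ log ‖riemannZeta y‖) x := by
  refine contDiffAt_log_norm_comp_ofReal ?_ (riemannZeta_ofReal_ne_zero hx) n
  rw [Complex.analyticAt_iff_eventually_differentiableAt]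
  filter_upwards [eventually_ne_nhds (Complex.ofReal_ne_one.2 hx₁)] with z hz
    using differentiableAt_riemannZeta hz

lemma contDiffAt_log_Gamma {x : ℝ} (hx : 0 < x) (n : WithTop ℕ∞) :
    ContDiffAt ℝ n (fun y ↦ log (Gamma y)) x := by
  have hinv : (Complex.Gamma x)⁻¹ ≠ 0 := by
    simpa [Complex.Gamma_ofReal] using (Gamma_pos_of_pos hx).ne'
  simpa [Complex.Gamma_ofReal] using (contDiffAt_log_norm_comp_ofReal
    (Complex.differentiable_one_div_Gamma.analyticAt x) hinv n).neg

lemma two_nsmul_iteratedDeriv_of_reflection {𝕜 F : Type*} [NontriviallyNormedField 𝕜]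
    [NormedAddCommGroup F] [NormedSpace 𝕜 F] {f h : 𝕜 → F} {a : 𝕜} {n : ℕ} (hn : Odd n)
    (hf : ContDiffAt 𝕜 n f a) (hh : ContDiffAt 𝕜 n h a)
    (hfh : (fun x ↦ f (2 * a - x)) =ᶠ[𝓝 a] fun x ↦ f x + h x) :
    2 • iteratedDeriv n f a = -iteratedDeriv n h a := by
  have hderiv := hfh.iteratedDeriv_eq n
  rw [iteratedDeriv_fun_add hf hh, iteratedDeriv_comp_const_sub] at hderiv
  simp only [hn.neg_one_pow, neg_one_smul, two_mul a, add_sub_cancel_right] at hderiv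
  rw [two_nsmul, eq_neg_iff_add_eq_zero, add_assoc, ← hderiv, add_neg_cancel]

lemma iteratedDeriv_succ_log_cos (n : ℕ) {x : ℝ} (hx : cos x ≠ 0) :
    iteratedDeriv (n + 1) (fun y ↦ log (cos y)) x = -iteratedDeriv n tan x := by
  have hderiv : deriv (fun y ↦ log (cos y)) =ᶠ[𝓝 x] fun y ↦ -tan y := by
    filter_upwards [continuous_cos.continuousAt.eventually_ne hx] with y hy
    rw [show (fun y ↦ log (cos y)) = log ∘ cos from rfl,
      deriv_log_comp_eq_logDeriv differentiableAt_cos hy, logDeriv_cos, Pi.neg_apply]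
  rw [iteratedDeriv_succ', hderiv.iteratedDeriv_eq, iteratedDeriv_fun_neg]

/-- The logarithm of the factor `2 (2π)⁻ˣ Γ(x) cos(πx/2)` relating `ζ(1 - x)` to `ζ(x)`. -/
noncomputable def logZetaFactor (x : ℝ) : ℝ :=
  log (Gamma x) + log (cos (π / 2 * x)) + (log 2 - log (2 * π) * x)

lemma cos_pi_div_two_mul_pos {x : ℝ} (hx₀ : 0 < x) (hx₁ : x < 1) : 0 < cos (π / 2 * x) :=
  cos_pos_of_mem_Ioo ⟨by nlinarith [pi_pos], by nlinarith [pi_pos]⟩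

lemma log_norm_riemannZeta_one_sub {x : ℝ} (hx₀ : 0 < x) (hx₁ : x < 1) :
    log ‖riemannZeta ((1 - x : ℝ) : ℂ)‖ = log ‖riemannZeta x‖ + logZetaFactor x := by
  have hcos := cos_pi_div_two_mul_pos hx₀ hx₁
  have hGamma := Gamma_pos_of_pos hx₀
  have hfactor : (2 * (2 * π) ^ (-(x : ℂ)) * Complex.Gamma x * Complex.cos (π * x / 2) : ℂ) =
      ((2 * (2 * π) ^ (-x) * Gamma x * cos (π / 2 * x) : ℝ) : ℂ) := by
    push_cast [Complex.ofReal_cpow two_pi_pos.le, ← Complex.Gamma_ofReal]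
    ring_nf
  have hne (n : ℕ) : (x : ℂ) ≠ -n := by
    have hreal : x ≠ -n := by linarith [n.cast_nonneg (α := ℝ)]
    exact_mod_cast hreal
  have hpow : 0 < (2 * π) ^ (-x) := rpow_pos_of_pos two_pi_pos _
  rw [Complex.ofReal_sub, Complex.ofReal_one,
    riemannZeta_one_sub hne (Complex.ofReal_ne_one.2 hx₁.ne), hfactor, norm_mul,
    Complex.norm_of_nonneg (by positivity), log_mul (by positivity)
      (norm_ne_zero_iff.2 (riemannZeta_ofReal_ne_zero hx₀)),
    log_mul (by positivity) hcos.ne', log_mul (by positivity) hGamma.ne',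
    log_mul two_ne_zero hpow.ne', log_rpow two_pi_pos, logZetaFactor]
  ring

lemma contDiffAt_log_cos_pi_div_two_mul {x : ℝ} (hx₀ : 0 < x) (hx₁ : x < 1) (n : WithTop ℕ∞) :
    ContDiffAt ℝ n (fun y ↦ log (cos (π / 2 * y))) x :=
  (contDiff_cos.contDiffAt.comp x (contDiffAt_const.mul contDiffAt_id)).log
    (cos_pi_div_two_mul_pos hx₀ hx₁).ne'

lemma contDiffAt_logZetaFactor {x : ℝ} (hx₀ : 0 < x) (hx₁ : x < 1) (n : WithTop ℕ∞) :
    ContDiffAt ℝ n logZetaFactor x :=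
  ((contDiffAt_log_Gamma hx₀ n).add (contDiffAt_log_cos_pi_div_two_mul hx₀ hx₁ n)).add
    (contDiffAt_const.sub (contDiffAt_const.mul contDiffAt_id))

lemma iteratedDeriv_logZetaFactor {k : ℕ} (hk : 1 ≤ k) {x : ℝ} (hx₀ : 0 < x) (hx₁ : x < 1) :
    iteratedDeriv (k + 1) logZetaFactor x =
      (-1) ^ (k + 1) * k.factorial * ∑' n : ℕ, 1 / (x + n) ^ (k + 1)
        - (π / 2) ^ (k + 1) * iteratedDeriv k tan (π / 2 * x) := by
  have hGamma := contDiffAt_log_Gamma hx₀ (k + 1 : ℕ)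
  have hcos := contDiffAt_log_cos_pi_div_two_mul hx₀ hx₁ (k + 1 : ℕ)
  have haffine : iteratedDeriv (k + 1) (fun y ↦ log 2 - log (2 * π) * y) x = 0 := by
    obtain ⟨k, rfl⟩ := Nat.exists_eq_add_of_le' hk
    simp [iteratedDeriv_succ', iteratedDeriv_const]
  unfold logZetaFactor
  rw [iteratedDeriv_fun_add (hGamma.add hcos) (by fun_prop), iteratedDeriv_fun_add hGamma hcos,
    haffine, iteratedDeriv_log_Gamma hk hx₀,
    iteratedDeriv_comp_mul_left (k + 1) (π / 2) (fun y ↦ log (cos y)), smul_eq_mul,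
    iteratedDeriv_succ_log_cos k (cos_pi_div_two_mul_pos hx₀ hx₁).ne']
  ring

lemma two_mul_iteratedDeriv_log_norm_riemannZeta_one_half {n : ℕ} (hn : Odd n) :
    2 * iteratedDeriv n (fun x : ℝ ↦ log ‖riemannZeta x‖) (1 / 2) =
      -iteratedDeriv n logZetaFactor (1 / 2) := by
  have hfun : (fun x : ℝ ↦ log ‖riemannZeta ((2 * (1 / 2) - x : ℝ) : ℂ)‖)
      =ᶠ[𝓝 (1 / 2)] fun x ↦ log ‖riemannZeta x‖ + logZetaFactor x := by
    filter_upwards [Ioo_mem_nhds one_half_pos one_half_lt_one] with x ⟨hx₀, hx₁⟩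
    rw [mul_one_div_cancel two_ne_zero, log_norm_riemannZeta_one_sub hx₀ hx₁]
  simpa only [nsmul_eq_mul, Nat.cast_ofNat] using two_nsmul_iteratedDeriv_of_reflection hn
    (contDiffAt_log_norm_riemannZeta one_half_pos (by norm_num) n)
    (contDiffAt_logZetaFactor one_half_pos one_half_lt_one n) hfun

lemma iteratedDeriv_log_norm_riemannZeta_one_half {m : ℕ} (hm : 1 ≤ m) :
    iteratedDeriv (2 * m + 1) (fun x : ℝ ↦ log ‖riemannZeta x‖) (1 / 2) =
      1 / 2 * (2 * m).factorial * ∑' n : ℕ, 1 / (1 / 2 + n : ℝ) ^ (2 * m + 1)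
        + 1 / 4 * π ^ (2 * m + 1) * |(eulerNumber (2 * m) : ℝ)| := by
  have hodd : Odd (2 * m + 1) := odd_two_mul_add_one m
  have hreflect := two_mul_iteratedDeriv_log_norm_riemannZeta_one_half hodd
  have hangle : π / 2 * (1 / 2) = π / 4 := by ring
  have hpow : (π / 2) ^ (2 * m + 1) * 4 ^ m = π ^ (2 * m + 1) / 2 := by
    have hfour : (4 : ℝ) ^ m = 2 ^ (2 * m) := by rw [pow_mul]; norm_num
    rw [hfour, pow_succ, pow_succ, mul_right_comm, ← mul_pow, div_mul_cancel₀ _ two_ne_zero,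
      mul_div_assoc]
  rw [iteratedDeriv_logZetaFactor (by lia) one_half_pos one_half_lt_one, hangle,
    iteratedDeriv_even_tan_pi_div_four, hodd.neg_one_pow] at hreflect
  linear_combination hreflect / 2 + |(eulerNumber (2 * m) : ℝ)| / 2 * hpow

end FunctionalEquation

/-- for `m ≥ 1`,
`(log|ζ|)^{(2m+1)}(1/2) = ½ (2m)! (2^{2m+1} - 1) ζ(2m+1) + ¼ π^{2m+1} |E_{2m}|`. -/
theorem log_abs_zeta_odd_deriv_one_half (m : ℕ) (hm : 1 ≤ m) :
    ((iteratedDeriv (2 * m + 1) (fun x : ℝ => Real.log ‖riemannZeta (x : ℂ)‖) (1 / 2) : ℝ) : ℂ) =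
      (1 / 2) * ((2 * m).factorial : ℂ) * (2 ^ (2 * m + 1) - 1) *
          riemannZeta ((2 * m + 1 : ℕ) : ℂ)
        + (1 / 4) * (Real.pi : ℂ) ^ (2 * m + 1) * ((|eulerNumber (2 * m)| : ℚ) : ℂ) := by
  have habs : ((|eulerNumber (2 * m)| : ℚ) : ℂ) = ((|(eulerNumber (2 * m) : ℝ)| : ℝ) : ℂ) := by
    norm_cast
  rw [iteratedDeriv_log_norm_riemannZeta_one_half hm, habs, Complex.ofReal_add, Complex.ofReal_mul,
    tsum_one_div_half_add_natCast_pow (by lia)]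
  push_cast
  ring
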